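/- arXiv:1712.05454 — 4 statements merged into one kernel-verified Lean document; each statement's English description precedes it below -/
import Mathlib

section
/- Let Λ = {λ_1,…,λ_n} (n ≥ 2) be a realizable generalized Suleĭmanova spectrum with s_1(Λ) = 0. Then the multiset Λ' of critical points of Λ is realizable. -/
open Polynomial

/-- A finite multiset of complex numbers is realizable if it is the multiset of
roots (with multiplicity) of the characteristic polynomial of some entrywise
nonnegative real matrix. -/
def Realizable (Λ : Multiset ℂ) : Prop :=
  ∃ (m : ℕ) (A : Matrix (Fin m) (Fin m) ℝ),
    (∀ i j, 0 ≤ A i j) ∧ (A.charpoly.map (algebraMap ℝ ℂ)).roots = Λ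

/-- coefficients extended by zero to the integers -/
def zc (q : ℝ[X]) (i : ℤ) : ℝ := if i < 0 then 0 else q.coeff i.toNat

/-- positive log-type sequences -/
def GoodSeq (m : ℤ) (b : ℤ → ℝ) : Prop :=
  (∀ i, 0 ≤ i → i ≤ m → 0 < b i) ∧ (∀ i, ¬ (0 ≤ i ∧ i ≤ m) → b i = 0) ∧
    ∀ k, b k * b (k + 3) ≤ b (k + 1) * b (k + 2)

lemma GoodSeq.nonneg {m : ℤ} {b : ℤ → ℝ} (h : GoodSeq m b) (i : ℤ) : 0 ≤ b i := by
  by_cases hi : 0 ≤ i ∧ i ≤ m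
  · exact (h.1 i hi.1 hi.2).le
  · exact (h.2.1 i hi).ge

lemma GoodSeq.sq {m : ℤ} {b : ℤ → ℝ} (h : GoodSeq m b) (k : ℤ) :
    b k * b (k + 4) ≤ b (k + 2) * b (k + 2) := by
  by_cases h1 : 0 ≤ k ∧ k + 4 ≤ m
  · have p1 := h.1 (k+1) (by omega) (by omega)
    have p3 := h.1 (k+3) (by omega) (by omega)
    have e1 := h.2.2 k
    have e2 := h.2.2 (k+1)
    rw [show k + 1 + 3 = k + 4 by ring, show k + 1 + 1 = k + 2 by ring,
      show k + 1 + 2 = k + 3 by ring] at e2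
    have := mul_le_mul e1 e2 (mul_nonneg (h.nonneg _) (h.nonneg _))
      (mul_nonneg (h.nonneg _) (h.nonneg _))
    have pp := mul_pos p1 p3
    refine le_of_mul_le_mul_left ?_ pp
    linarith
  · have : b k * b (k + 4) = 0 := by
      by_cases h0 : 0 ≤ k
      · rw [h.2.1 (k+4) (by omega), mul_zero]
      · rw [h.2.1 k (by omega), zero_mul]
    rw [this]
    exact mul_nonneg (h.nonneg _) (h.nonneg _)

lemma GoodSeq.five {m : ℤ} {b : ℤ → ℝ} (h : GoodSeq m b) (k : ℤ) :
    b k * b (k + 5) ≤ b (k + 1) * b (k + 4) := by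
  by_cases h1 : 0 ≤ k ∧ k + 5 ≤ m
  · have p1 := h.1 (k+2) (by omega) (by omega)
    have p3 := h.1 (k+3) (by omega) (by omega)
    have e1 := h.2.2 k
    have e2 := h.2.2 (k+2)
    rw [show k + 2 + 3 = k + 5 by ring, show k + 2 + 1 = k + 3 by ring,
      show k + 2 + 2 = k + 4 by ring] at e2
    have := mul_le_mul e1 e2 (mul_nonneg (h.nonneg _) (h.nonneg _))
      (mul_nonneg (h.nonneg _) (h.nonneg _))
    have pp := mul_pos p1 p3
    refine le_of_mul_le_mul_left ?_ pp
    linarith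
  · have : b k * b (k + 5) = 0 := by
      by_cases h0 : 0 ≤ k
      · rw [h.2.1 (k+5) (by omega), mul_zero]
      · rw [h.2.1 k (by omega), zero_mul]
    rw [this]
    exact mul_nonneg (h.nonneg _) (h.nonneg _)

lemma GoodSeq.conv {m : ℤ} {b : ℤ → ℝ} (h : GoodSeq m b) (d β γ : ℝ) (hd : 0 ≤ d) (hβ : 0 ≤ β)
    (hγ : 0 ≤ γ) (c : ℤ → ℝ) (hc : ∀ i, c i = d * b i + β * b (i - 1) + γ * b (i - 2)) (k : ℤ) :
    c k * c (k + 3) ≤ c (k + 1) * c (k + 2) := by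
  obtain ⟨j, rfl⟩ : ∃ j, k = j + 2 := ⟨k - 2, by ring⟩
  have e0 := h.2.2 j
  have e1 := h.2.2 (j + 1)
  have e2 := h.2.2 (j + 2)
  have s0 := h.sq j
  have s1 := h.sq (j + 1)
  have f0 := h.five j
  simp only [hc]
  ring_nf at e0 e1 e2 s0 s1 f0 ⊢
  have q1 := mul_le_mul_of_nonneg_left e2 (mul_nonneg hd hd)
  have q2 := mul_le_mul_of_nonneg_left s1 (mul_nonneg hd hβ)
  have q3 := mul_le_mul_of_nonneg_left f0 (mul_nonneg hd hγ)
  have q4 := mul_le_mul_of_nonneg_left e1 (mul_nonneg hβ hβ)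
  have q5 := mul_le_mul_of_nonneg_left s0 (mul_nonneg hβ hγ)
  have q6 := mul_le_mul_of_nonneg_left e0 (mul_nonneg hγ hγ)
  ring_nf at q1 q2 q3 q4 q5 q6
  linarith

lemma GoodSeq.lin {m : ℤ} (hm : 0 ≤ m) {b : ℤ → ℝ} (h : GoodSeq m b) (d : ℝ) (hd : 0 < d)
    (c : ℤ → ℝ) (hc : ∀ i, c i = d * b i + b (i - 1)) : GoodSeq (m + 1) c := by
  refine ⟨fun i h0 h1 => ?_, fun i hi => ?_, ?_⟩
  · rw [hc]
    by_cases hi : i ≤ m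
    · have := mul_pos hd (h.1 i h0 hi)
      linarith [h.nonneg (i-1)]
    · have := h.1 (i-1) (by omega) (by omega)
      linarith [mul_nonneg hd.le (h.nonneg i)]
  · rw [hc, h.2.1 i (by omega), h.2.1 (i-1) (by omega)]; simp
  · exact h.conv d 1 0 hd.le zero_le_one le_rfl c (fun i => by rw [hc]; ring)

lemma GoodSeq.quad {m : ℤ} (hm : 0 ≤ m) {b : ℤ → ℝ} (h : GoodSeq m b) (d β : ℝ) (hd : 0 < d)
    (hβ : 0 < β)
    (c : ℤ → ℝ) (hc : ∀ i, c i = d * b i + β * b (i - 1) + b (i - 2)) : GoodSeq (m + 2) c := by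
  refine ⟨fun i h0 h1 => ?_, fun i hi => ?_, ?_⟩
  · rw [hc]
    have n0 := mul_nonneg hd.le (h.nonneg i)
    have n1 := mul_nonneg hβ.le (h.nonneg (i-1))
    have n2 := h.nonneg (i-2)
    by_cases hi : i ≤ m
    · have := mul_pos hd (h.1 i h0 hi)
      linarith
    · by_cases hi' : i = m + 1
      · have := mul_pos hβ (h.1 (i-1) (by omega) (by omega))
        linarith
      · have := h.1 (i-2) (by omega) (by omega)
        linarith
  · rw [hc, h.2.1 i (by omega), h.2.1 (i-1) (by omega), h.2.1 (i-2) (by omega)]; simp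
  · exact h.conv d β 1 hd.le hβ.le zero_le_one c (fun i => by rw [hc]; ring)

lemma zc_nat (q : ℝ[X]) (i : ℕ) : zc q i = q.coeff i := by simp [zc]

lemma zc_neg (q : ℝ[X]) (i : ℤ) (hi : i < 0) : zc q i = 0 := by simp [zc, hi]

lemma zc_add (p q : ℝ[X]) (i : ℤ) : zc (p + q) i = zc p i + zc q i := by
  unfold zc; split_ifs <;> simp

lemma zc_C_mul (a : ℝ) (q : ℝ[X]) (i : ℤ) : zc (C a * q) i = a * zc q i := by
  unfold zc; split_ifs <;> simp

lemma zc_X_mul (q : ℝ[X]) (i : ℤ) : zc (X * q) i = zc q (i - 1) := by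
  rcases lt_trichotomy i 0 with h | h | h
  · rw [zc_neg _ _ h, zc_neg _ _ (by omega)]
  · subst h; simp [zc]
  · obtain ⟨j, rfl⟩ : ∃ j : ℕ, i = ((j + 1 : ℕ) : ℤ) := ⟨(i - 1).toNat, by omega⟩
    rw [zc_nat, show ((j + 1 : ℕ) : ℤ) - 1 = (j : ℤ) by push_cast; ring, zc_nat, coeff_X_mul]

lemma good_of_stable (N : ℕ) : ∀ q : ℝ[X], q.natDegree = N → q.Monic →
    (∀ z : ℂ, aeval z q = 0 → z.re < 0) → GoodSeq N (zc q) := by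
  induction N using Nat.strong_induction_on with
  | _ N ih =>
  intro q hN hq hz
  rcases Nat.eq_zero_or_pos N with h0 | hpos
  · subst h0
    have : q = 1 := hq.natDegree_eq_zero.mp hN
    subst this
    have key : ∀ i : ℤ, zc 1 i = if i = 0 then 1 else 0 := by
      intro i
      rcases lt_trichotomy i 0 with h | h | h
      · rw [zc_neg _ _ h, if_neg (by omega)]
      · subst h; simp [zc]
      · rw [if_neg (by omega), zc, if_neg (by omega), coeff_one, if_neg (by omega)]
    refine ⟨fun i h1 h2 => ?_, fun i hi => ?_, fun k => ?_⟩
    · rw [key, if_pos (by push_cast at h2; omega)]; norm_num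
    · rw [key, if_neg (by push_cast at hi; omega)]
    · simp only [key]
      split_ifs <;> first | omega | norm_num
  · obtain ⟨z, hz0⟩ : ∃ z : ℂ, aeval z q = 0 :=
      IsAlgClosed.exists_aeval_eq_zero _ q (by
        rw [degree_eq_natDegree hq.ne_zero, hN]; exact_mod_cast hpos.ne')
    have hre := hz z hz0
    by_cases him : z.im = 0
    · have hzz : z = algebraMap ℝ ℂ z.re := Complex.ext (by simp) (by simp [him])
      have hroot : q.IsRoot z.re := by
        rw [hzz, aeval_algebraMap_apply] at hz0
        simpa using hz0
      obtain ⟨r, rfl⟩ := dvd_iff_isRoot.mpr hroot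
      have hr : r.Monic := (monic_X_sub_C _).of_mul_monic_left hq
      have hdeg : r.natDegree + 1 = N := by
        rw [(monic_X_sub_C _).natDegree_mul hr, natDegree_X_sub_C] at hN; omega
      have hg := ih r.natDegree (by omega) r rfl hr (fun w hw => hz w (by simp [hw]))
      have := hg.lin (by omega) (-z.re) (by linarith) (zc ((X - C z.re) * r)) (fun i => by
        rw [show (X - C z.re) * r = C (-z.re) * r + X * r by rw [C_neg]; ring,
          zc_add, zc_C_mul, zc_X_mul])
      rw [← hdeg]; push_cast; exact this
    · obtain ⟨r, hr0⟩ := q.quadratic_dvd_of_aeval_eq_zero_im_ne_zero hz0 him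
      have hmon : (X ^ 2 - C (2 * z.re) * X + C (‖z‖ ^ 2) : ℝ[X]).Monic := by monicity!
      have hnd : (X ^ 2 - C (2 * z.re) * X + C (‖z‖ ^ 2) : ℝ[X]).natDegree = 2 := by
        compute_degree!
      have hr : r.Monic := hmon.of_mul_monic_left (hr0 ▸ hq)
      have hdeg : r.natDegree + 2 = N := by
        rw [hr0, hmon.natDegree_mul hr, hnd] at hN; omega
      have hg := ih r.natDegree (by omega) r rfl hr (fun w hw => hz w (by rw [hr0]; simp [hw]))
      have hzne : z ≠ 0 := fun h => him (by simp [h])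
      have := hg.quad (by omega) (‖z‖ ^ 2) (-(2 * z.re)) (by positivity) (by linarith)
        (zc q) (fun i => by
        rw [hr0, show (X ^ 2 - C (2 * z.re) * X + C (‖z‖ ^ 2)) * r
            = C (‖z‖^2) * r + C (-(2 * z.re)) * (X * r) + X * (X * r) by rw [C_neg]; ring,
          zc_add, zc_add, zc_C_mul, zc_C_mul, zc_X_mul, zc_X_mul, zc_X_mul]
        rw [show i - 1 - 1 = i - 2 by ring])
      rw [← hdeg]; push_cast; exact this

lemma companion_real (f : ℝ[X]) (hf : f.Monic) (hc : ∀ i < f.natDegree, f.coeff i ≤ 0) :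
    ∃ (m : ℕ) (A : Matrix (Fin m) (Fin m) ℝ), (∀ i j, 0 ≤ A i j) ∧ A.charpoly = f := by
  set pb := AdjoinRoot.powerBasis hf.ne_zero with hpb
  have hmin : minpoly ℝ pb.gen = f := AdjoinRoot.minpoly_powerBasis_gen_of_monic hf
  refine ⟨pb.dim, Algebra.leftMulMatrix pb.basis pb.gen, fun i j => ?_, ?_⟩
  · rw [PowerBasis.leftMulMatrix, Matrix.of_apply, PowerBasis.minpolyGen_eq, hmin]
    have : pb.dim = f.natDegree := AdjoinRoot.powerBasis_dim hf.ne_zero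
    have := hc i (by rw [← this]; exact i.2)
    split_ifs <;> linarith
  · rw [charpoly_leftMulMatrix, hmin]

lemma coeff_two (m : ℕ) (hm : 2 ≤ m) (A : Matrix (Fin m) (Fin m) ℝ) (hA : ∀ i j, 0 ≤ A i j)
    (ht : A.trace = 0) : A.charpoly.coeff (m - 2) ≤ 0 := by
  have hd : ∀ i, A i i = 0 := by
    intro i
    exact (Finset.sum_eq_zero_iff_of_nonneg (fun i _ => hA i i)).mp ht i (Finset.mem_univ i)
  have := Matrix.charpoly_coeff_eq_sum_minors A 2 (by simpa using hm)
  rw [Fintype.card_fin] at this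
  rw [this]
  have : ∑ s ∈ (Finset.univ : Finset (Fin m)).powersetCard 2,
      (A.submatrix (Subtype.val : s → Fin m) (Subtype.val : s → Fin m)).det ≤ 0 := by
    refine Finset.sum_nonpos fun s hs => ?_
    let e := Finset.equivFinOfCardEq (Finset.mem_powersetCard.mp hs).2
    rw [← Matrix.det_submatrix_equiv_self e.symm, Matrix.det_fin_two]
    simp only [Matrix.submatrix_apply, hd]
    have := mul_nonneg (hA (e.symm 0) (e.symm 1)) (hA (e.symm 1) (e.symm 0))
    linarith
  simpa using this

lemma coeff_nonpos (n : ℕ) (hn : 2 ≤ n) (q : ℝ[X]) (ρ : ℝ) (hq : q.Monic)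
    (hdeg : q.natDegree = n - 1) (hg : GoodSeq ((n - 1 : ℕ) : ℤ) (zc q))
    (h1 : ((X - C ρ) * q).coeff (n - 1) = 0) (h2 : ((X - C ρ) * q).coeff (n - 2) ≤ 0) :
    ∀ i < n, ((X - C ρ) * q).coeff i ≤ 0 := by
  have e : ∀ i : ℤ, zc ((X - C ρ) * q) i = zc q (i - 1) - ρ * zc q i := by
    intro i
    rw [show (X - C ρ) * q = C (-ρ) * q + X * q by rw [C_neg]; ring, zc_add, zc_C_mul, zc_X_mul]
    ring
  have key : ∀ j : ℕ, j + 1 ≤ n → ((X - C ρ) * q).coeff (n - 1 - j) ≤ 0 := by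
    intro j
    induction j using Nat.strong_induction_on with
    | _ j ih =>
    intro hj
    match j, ih, hj with
    | 0, _, _ => exact h1.le
    | 1, _, _ => rwa [show n - 1 - 1 = n - 2 by omega]
    | j + 2, ih, hj =>
      have h := ih j (by omega) (by omega)
      rw [← zc_nat, e] at h ⊢
      obtain ⟨k, hk⟩ : ∃ k : ℕ, n - 1 - (j + 2) = k := ⟨_, rfl⟩
      rw [show n - 1 - j = k + 2 by omega] at h
      rw [hk]
      push_cast at h
      have b := hg.2.2 ((k:ℤ) - 1)
      rw [show (k:ℤ) - 1 + 3 = k + 2 by ring, show (k:ℤ) - 1 + 1 = k by ring,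
        show (k:ℤ) - 1 + 2 = k + 1 by ring] at b
      rw [show (k:ℤ) + 2 - 1 = k + 1 by ring] at h
      have pos := hg.1 ((k:ℤ)+2) (by omega) (by omega)
      have nn := hg.nonneg k
      have := mul_le_mul_of_nonneg_left (sub_nonpos.mp h) nn
      rw [sub_nonpos]
      refine le_of_mul_le_mul_right ?_ pos
      linarith
  intro i hi
  have := key (n - 1 - i) (by omega)
  rwa [show n - 1 - (n - 1 - i) = i by omega] at this

/-- if Λ is a realizable generalized Suleĭmanova spectrum (exactly one
element with nonnegative real part) with s₁(Λ) = 0, then the multiset Λ' of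
critical points of Λ is realizable. -/
theorem generalized_suleimanova_trace_zero (n : ℕ) (hn : 2 ≤ n)
    (Λ : Multiset ℂ) (hcard : Λ.card = n)
    (hreal : Realizable Λ)
    (htrace : Λ.sum = 0)
    (hgs : (Λ.filter fun z => 0 ≤ z.re).card = 1)
    (p : Polynomial ℂ) (hp : p = (Λ.map fun l => X - C l).prod) :
    Realizable p.derivative.roots := by
  obtain ⟨m, A, hA, hroots⟩ := hreal
  set P := A.charpoly with hP
  have hPm : P.Monic := A.charpoly_monic
  have hPd : P.natDegree = m := by rw [hP, A.charpoly_natDegree_eq_dim, Fintype.card_fin]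
  have hsplit : (P.map (algebraMap ℝ ℂ)).Splits := IsAlgClosed.splits _
  have hmap : P.map (algebraMap ℝ ℂ) = p := by
    rw [hp, ← hroots]
    exact hsplit.eq_prod_roots_of_monic (hPm.map _)
  have hmn : m = n := by
    rw [← hcard, ← hroots, ← hsplit.natDegree_eq_card_roots, natDegree_map, hPd]
  subst hmn
  have htr : A.trace = 0 := by
    have h := hsplit.nextCoeff_eq_neg_sum_roots_of_monic (hPm.map _)
    rw [hroots, htrace, neg_zero, nextCoeff_map (algebraMap ℝ ℂ).injective] at h
    have : P.nextCoeff = 0 := by simpa using h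
    rw [Matrix.trace_eq_neg_charpoly_nextCoeff, ← hP, this, neg_zero]
  have hc2 := coeff_two m hn A hA htr
  have hc1 : P.coeff (m - 1) = 0 := by
    haveI : Nonempty (Fin m) := ⟨⟨0, by omega⟩⟩
    have := A.trace_eq_neg_charpoly_coeff
    rw [htr, Fintype.card_fin] at this
    linarith
  have hmem : ∀ z : ℂ, z ∈ Λ ↔ aeval z P = 0 := by
    intro z
    rw [← hroots, mem_roots (hPm.map _).ne_zero, IsRoot.def, eval_map_algebraMap]
  obtain ⟨w, hw⟩ := Multiset.card_eq_one.mp hgs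
  have hwm : w ∈ Λ ∧ 0 ≤ w.re := by
    have : w ∈ Λ.filter fun z => 0 ≤ z.re := by rw [hw]; simp
    simpa using this
  have huniq : ∀ z ∈ Λ, 0 ≤ z.re → z = w := by
    intro z h1 h2
    have : z ∈ Λ.filter fun z => 0 ≤ z.re := by simp [h1, h2]
    rw [hw] at this; simpa using this
  have him : w.im = 0 := by
    have := huniq (starRingEnd ℂ w) (by
      rw [hmem, aeval_conj, (hmem w).mp hwm.1, map_zero]) (by simpa using hwm.2)
    exact Complex.conj_eq_iff_im.mp this
  have hww : w = algebraMap ℝ ℂ w.re := Complex.ext (by simp) (by simp [him])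
  have hroot : P.IsRoot w.re := by
    have h := (hmem w).mp hwm.1
    rw [hww, aeval_algebraMap_apply] at h
    simpa using h
  obtain ⟨q, hq0⟩ := dvd_iff_isRoot.mpr hroot
  have hq : q.Monic := (monic_X_sub_C _).of_mul_monic_left (hq0 ▸ hPm)
  have hqd : q.natDegree = m - 1 := by
    rw [hq0, (monic_X_sub_C _).natDegree_mul hq, natDegree_X_sub_C] at hPd; omega
  have hΛ : Λ = w ::ₘ (q.map (algebraMap ℝ ℂ)).roots := by
    rw [← hroots, hq0, Polynomial.map_mul, roots_mul (mul_ne_zero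
      ((monic_X_sub_C _).map _).ne_zero (hq.map _).ne_zero)]
    rw [Polynomial.map_sub, map_X, map_C, roots_X_sub_C, ← hww]; rfl
  have hstab : ∀ z : ℂ, aeval z q = 0 → z.re < 0 := by
    intro z hz
    by_contra! hge
    have hzm : z ∈ (q.map (algebraMap ℝ ℂ)).roots := by
      rw [mem_roots (hq.map _).ne_zero, IsRoot.def, eval_map_algebraMap, hz]
    rw [hΛ, Multiset.filter_cons_of_pos (p := fun z : ℂ => 0 ≤ z.re) _ hwm.2, Multiset.card_cons] at hgs
    have : 0 < ((q.map (algebraMap ℝ ℂ)).roots.filter fun z => 0 ≤ z.re).card :=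
      Multiset.card_pos_iff_exists_mem.mpr ⟨z, by simp only [Multiset.mem_filter]; exact ⟨hzm, hge⟩⟩
    omega
  have hg := good_of_stable (m - 1) q hqd hq hstab
  have hco : ∀ i < m, P.coeff i ≤ 0 := by
    rw [hq0]
    exact coeff_nonpos m hn q w.re hq hqd hg (hq0 ▸ hc1) (by rw [← hq0]; exact hc2)
  have hm0 : (0:ℝ) < m := by exact_mod_cast (by omega : 0 < m)
  have hlead : P.coeff m = 1 := by rw [← hPd]; exact hPm
  have hdd : P.derivative.natDegree ≤ m - 1 := by
    rw [← hPd]; exact natDegree_derivative_le P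
  have hfd : (C (m:ℝ)⁻¹ * P.derivative).natDegree ≤ m - 1 :=
    (natDegree_C_mul_le _ _).trans hdd
  have hfm : (C (m:ℝ)⁻¹ * P.derivative).Monic := by
    refine monic_of_natDegree_le_of_coeff_eq_one (m - 1) hfd ?_
    rw [coeff_C_mul, coeff_derivative, show m - 1 + 1 = m by omega, hlead,
      Nat.cast_sub (by omega)]
    push_cast
    field_simp
    ring
  obtain ⟨k, B, hB, hBc⟩ := companion_real _ hfm (fun i hi => by
    rw [coeff_C_mul, coeff_derivative]
    refine mul_nonpos_of_nonneg_of_nonpos (by positivity) ?_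
    exact mul_nonpos_of_nonpos_of_nonneg (hco _ (by omega)) (by positivity))
  refine ⟨k, B, hB, ?_⟩
  rw [hBc, Polynomial.map_mul, map_C, ← derivative_map, hmap, roots_C_mul]
  simpa using hm0.ne'
end

section
/- Let Λ = {λ_1,…,λ_n} ⊂ ℝ (n ≥ 2) with λ_1 ≥ λ_2 ≥ … ≥ λ_n. If (n−1)λ_n + λ_1 ≥ 0, then the multiset Λ' of critical points of Λ is realizable; indeed the d-companion matrix A with entries a_{ij} = (1/n)((n−1)λ_{i+1} + λ_1) for i = j and a_{ij} = (1/n)(λ_1 − λ_{i+1}) for i ≠ j is entrywise nonnegative and has spectrum Λ'. -/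
open Polynomial

lemma det_diag_sub_aux {K : Type*} [Field K] {m : ℕ} (d u : Fin m → K) (hd : ∀ i, d i ≠ 0) :
    (Matrix.diagonal d - Matrix.of fun i _ => u i).det
      = ∏ i, d i - ∑ i, u i * ∏ j ∈ Finset.univ.erase i, d j := by
  have h1 : (Matrix.diagonal d - Matrix.of fun i _ => u i) =
      Matrix.diagonal d * (1 + Matrix.replicateCol Unit (fun i => -(u i / d i)) *
        Matrix.replicateRow Unit (fun _ => (1 : K))) := by
    ext i j
    rw [Matrix.diagonal_mul]
    simp only [Matrix.sub_apply, Matrix.of_apply, Matrix.add_apply, Matrix.mul_apply,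
      Matrix.replicateCol_apply, Matrix.replicateRow_apply, Finset.univ_unique,
      Finset.sum_singleton, Matrix.diagonal_apply, Matrix.one_apply]
    have := hd i
    split_ifs <;> field_simp <;> ring
  rw [h1, Matrix.det_mul, Matrix.det_diagonal, Matrix.det_one_add_replicateCol_mul_replicateRow,
    mul_add, mul_one, sub_eq_add_neg, ← Finset.sum_neg_distrib]
  congr 1
  simp only [dotProduct, one_mul]
  rw [Finset.mul_sum]
  refine Finset.sum_congr rfl fun i _ => ?_
  rw [← Finset.mul_prod_erase _ _ (Finset.mem_univ i)]
  have := hd i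
  field_simp

lemma det_diag_sub_aux2 {R : Type*} [CommRing R] [IsDomain R] {m : ℕ} (d u : Fin m → R)
    (hd : ∀ i, d i ≠ 0) :
    (Matrix.diagonal d - Matrix.of fun i _ => u i).det
      = ∏ i, d i - ∑ i, u i * ∏ j ∈ Finset.univ.erase i, d j := by
  apply IsFractionRing.injective R (FractionRing R)
  have h := det_diag_sub_aux (K := FractionRing R) (fun i => algebraMap R _ (d i))
    (fun i => algebraMap R _ (u i)) (fun i => by
      simpa using hd i)
  rw [RingHom.map_det]
  simp only [map_sub, map_prod, map_sum, map_mul]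
  rw [← h]
  congr 1
  ext i j
  by_cases hij : i = j
  · subst hij; simp
  · simp [hij]

lemma charpoly_aux (m : ℕ) (l : Fin (m + 1) → ℂ) (u : Fin m → ℂ)
    (hu : ∀ i, ((m : ℂ) + 1) * u i = l 0 - l i.succ) :
    C ((m : ℂ) + 1) *
      (Matrix.diagonal (fun i : Fin m => l i.succ) + Matrix.of fun i _ => u i).charpoly
      = (∏ i, (X - C (l i))).derivative := by
  have h : (Matrix.diagonal (fun i : Fin m => l i.succ) + Matrix.of fun i _ => u i).charpoly
      = ∏ i : Fin m, (X - C (l i.succ)) - ∑ i : Fin m, C (u i) *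
        ∏ j ∈ Finset.univ.erase i, (X - C (l j.succ)) := by
    rw [← det_diag_sub_aux2 _ _ (fun i => X_sub_C_ne_zero _), Matrix.charpoly]
    congr 1
    ext1 i j
    by_cases hij : i = j
    · subst hij; simp; ring
    · simp [hij, Matrix.charmatrix_apply_ne]
  rw [h, Fin.prod_univ_succ, derivative_mul, derivative_prod_finset]
  simp only [derivative_sub, derivative_X, derivative_C, sub_zero, mul_one, one_mul]
  rw [mul_sub, Finset.mul_sum, Finset.mul_sum]
  have e : ∀ i : Fin m, C ((m : ℂ) + 1) * (C (u i) *
        ∏ j ∈ Finset.univ.erase i, (X - C (l j.succ)))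
      = ∏ j : Fin m, (X - C (l j.succ)) - (X - C (l 0)) *
        ∏ j ∈ Finset.univ.erase i, (X - C (l j.succ)) := by
    intro i
    rw [← Finset.mul_prod_erase _ _ (Finset.mem_univ i), ← mul_assoc, ← C_mul, hu, C_sub]
    ring
  simp only [e, Finset.sum_sub_distrib, Finset.sum_const, Finset.card_univ, Fintype.card_fin]
  simp
  ring

/-- if λ₁ ≥ … ≥ λₙ are real and (n-1)λₙ + λ₁ ≥ 0, then the
d-companion matrix A, with a_{ij} = ((n-1)λ_{i+1} + λ₁)/n for i = j and
a_{ij} = (λ₁ - λ_{i+1})/n for i ≠ j, is entrywise nonnegative and its spectrum is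
the multiset Λ' of critical points of Λ; hence Λ' is realizable. -/
theorem d_companion_nonneg_realizable (n : ℕ) (hn : 2 ≤ n)
    (lam : Fin n → ℝ) (hlam : Antitone lam)
    (hineq : 0 ≤ ((n : ℝ) - 1) * lam ⟨n - 1, by omega⟩ + lam ⟨0, by omega⟩)
    (p : Polynomial ℂ) (hp : p = ∏ i, (X - C ((lam i : ℂ))))
    (A : Matrix (Fin (n - 1)) (Fin (n - 1)) ℝ)
    (hA : A = Matrix.of fun i j : Fin (n - 1) =>
      if i = j then
        (((n : ℝ) - 1) * lam ⟨(i : ℕ) + 1, by have := i.isLt; omega⟩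
          + lam ⟨0, by omega⟩) / n
      else (lam ⟨0, by omega⟩ - lam ⟨(i : ℕ) + 1, by have := i.isLt; omega⟩) / n) :
    (∀ i j, 0 ≤ A i j) ∧
    ((A.map (algebraMap ℝ ℂ)).charpoly.roots = p.derivative.roots) ∧
    Realizable p.derivative.roots := by
  obtain ⟨m, rfl⟩ : ∃ m, n = m + 1 := ⟨n - 1, by omega⟩
  have hm : (0 : ℝ) ≤ m := Nat.cast_nonneg m
  have hnn : ∀ i j, 0 ≤ A i j := by
    intro i j
    have hi := i.isLt
    rw [hA, Matrix.of_apply]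
    split_ifs with h
    · apply div_nonneg _ (Nat.cast_nonneg _)
      refine hineq.trans ?_
      have h1 : lam ⟨m + 1 - 1, by omega⟩ ≤ lam ⟨(i : ℕ) + 1, by omega⟩ :=
        hlam (by rw [Fin.mk_le_mk]; omega)
      have h2 := mul_le_mul_of_nonneg_left h1 hm
      have h3 : ((m + 1 : ℕ) : ℝ) - 1 = m := by push_cast; ring
      rw [h3]
      exact add_le_add_left h2 _
    · apply div_nonneg _ (Nat.cast_nonneg _)
      exact sub_nonneg.2 (hlam (by rw [Fin.mk_le_mk]; omega))
  have hroots : (A.map (algebraMap ℝ ℂ)).charpoly.roots = p.derivative.roots := by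
    have hm1 : (m : ℂ) + 1 ≠ 0 := Nat.cast_add_one_ne_zero m
    have key := charpoly_aux m (fun i => (lam i : ℂ))
      (fun i => ((lam 0 : ℂ) - lam i.succ) / ((m : ℂ) + 1))
      (fun i => by field_simp)
    rw [hp, ← key, roots_C_mul _ hm1]
    congr 2
    rw [hA]
    ext i j
    have e0 : (⟨0, by omega⟩ : Fin (m + 1)) = 0 := rfl
    by_cases hij : i = j
    · subst hij
      simp [Fin.succ]
      field_simp
      ring
    · simp [hij, Fin.succ]
  refine ⟨hnn, hroots, m + 1 - 1, A, hnn, ?_⟩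
  rw [← hroots, Matrix.charpoly_map]
end

section
/- Let Λ = {λ_1,…,λ_n} ⊂ ℝ (n ≥ 2) be a Ciarlet spectrum, i.e., λ_1 ≥ λ_2 ≥ … ≥ λ_n and nλ_n + λ_1 ≥ 0. Then the multiset Λ' of critical points of Λ is realizable. -/
open Polynomial

lemma real_fin (k : ℕ) (a : ℝ) (v : Fin k → ℝ) (h : ∑ i, max (-v i) 0 ≤ a) :
    Realizable ((a ::ₘ (Finset.univ.val.map v)).map (fun x : ℝ => (x : ℂ))) := by
  classical
  let e : Matrix (Fin k) Unit ℝ := Matrix.of fun i _ => if v i < 0 then 1 else 0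
  let q : Matrix Unit (Fin k) ℝ := Matrix.of fun _ i => max (-v i) 0
  let S : Matrix (Unit ⊕ Fin k) (Unit ⊕ Fin k) ℝ := Matrix.fromBlocks 1 0 e 1
  let S' : Matrix (Unit ⊕ Fin k) (Unit ⊕ Fin k) ℝ := Matrix.fromBlocks 1 0 (-e) 1
  let T : Matrix (Unit ⊕ Fin k) (Unit ⊕ Fin k) ℝ :=
    Matrix.fromBlocks (Matrix.diagonal fun _ => a) q 0 (Matrix.diagonal v)
  have hS : S' * S = 1 := by
    simp [S, S', Matrix.fromBlocks_multiply]
  let A := S * T * S'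
  have hqe : ∀ i j, (q * e) i j = ∑ i, max (-v i) 0 := by
    intro i j
    simp only [Matrix.mul_apply, q, e, Matrix.of_apply]
    refine Finset.sum_congr rfl fun x _ => ?_
    split_ifs with hx
    · simp
    · rw [max_eq_right (by linarith)]; simp
  have hA : A = Matrix.fromBlocks (Matrix.diagonal (fun _ => a) - q * e) q
      (e * (Matrix.diagonal (fun _ => a) - q * e) - Matrix.diagonal v * e) (e * q + Matrix.diagonal v) := by
    simp only [A, S, T, S', Matrix.fromBlocks_multiply]
    congr 1 <;> simp [Matrix.mul_sub, Matrix.add_mul, Matrix.mul_assoc, sub_eq_add_neg, Matrix.mul_add]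
    abel
  have hAnn : ∀ i j, 0 ≤ A i j := by
    rw [hA]
    rintro (i | i) (j | j)
    · simp [hqe]; linarith
    · simp [q]
    · simp only [Matrix.fromBlocks_apply₂₁, Matrix.sub_apply, Matrix.diagonal_mul]
      simp only [Matrix.mul_apply, Matrix.sub_apply, hqe, Finset.univ_unique, Finset.sum_singleton]
      simp only [e, Matrix.of_apply]
      split_ifs with hi
      · simp; linarith
      · simp
    · simp only [Matrix.fromBlocks_apply₂₂, Matrix.add_apply, Matrix.mul_apply, Finset.univ_unique,
        Finset.sum_singleton, e, q, Matrix.of_apply]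
      by_cases hij : i = j
      · subst hij
        simp only [Matrix.diagonal_apply_eq]
        split_ifs with hi
        · have := le_max_left (-v i) 0; linarith
        · simp; linarith
      · rw [Matrix.diagonal_apply_ne _ hij]
        split_ifs <;> simp
  have hcp : A.charpoly = (X - C a) * ∏ i, (X - C (v i)) := by
    have : A.charpoly = T.charpoly := by
      simp only [A]
      rw [Matrix.charpoly_mul_comm, ← Matrix.mul_assoc, hS, Matrix.one_mul]
    rw [this, Matrix.charpoly_fromBlocks_zero₂₁, Matrix.charpoly_diagonal, Matrix.charpoly_diagonal]
    simp
  let f := Fintype.equivFin (Unit ⊕ Fin k)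
  refine ⟨_, Matrix.reindex f f A, fun i j => by simpa using hAnn _ _, ?_⟩
  rw [Matrix.charpoly_reindex, hcp]
  have : ((X - C a) * ∏ i, (X - C (v i))).map (algebraMap ℝ ℂ)
    = (((a ::ₘ (Finset.univ.val.map v)).map (fun x : ℝ => (x : ℂ))).map (fun x => X - C x)).prod := by
    rw [Polynomial.map_mul, Polynomial.map_prod, Multiset.map_cons, Multiset.map_cons,
      Multiset.prod_cons, Multiset.map_map, Multiset.map_map]
    simp only [Polynomial.map_sub, Polynomial.map_X, Polynomial.map_C]
    rfl
  rw [this, Polynomial.roots_multiset_prod_X_sub_C]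

lemma real_ms (a : ℝ) (s : Multiset ℝ) (h : (s.map (fun x => max (-x) 0)).sum ≤ a) :
    Realizable ((a ::ₘ s).map (fun x : ℝ => (x : ℂ))) := by
  induction s using Quotient.inductionOn with | _ l => 
  have : (Finset.univ.val.map l.get) = (l : Multiset ℝ) := by
    simp
  have h2 := real_fin l.length a l.get
  rw [this] at h2
  refine h2 ?_
  rw [← Multiset.quot_mk_to_coe] at this
  rw [← this, Multiset.map_map] at h
  exact h

lemma deriv_nonpos (k : ℕ) (lam : Fin (k+2) → ℝ) (hlam : Antitone lam)
    (h : 0 ≤ ((k:ℝ)+2) * lam (Fin.last _) + lam 0) (h0 : 0 ≤ lam 0) :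
    (derivative (∏ i, (X - C (lam i)))).eval (max (k / (k+2) * lam 0) (lam 1)) ≤ 0 := by
  set c := max (k / (k+2) * lam 0) (lam 1) with hc
  set d := lam 0 / (k+2) with hd
  have hd0 : lam 0 = (k+2) * d := by rw [hd]; field_simp
  have hcd : k / (k+2) * lam 0 = k * d := by rw [hd]; field_simp
  have hdn : 0 ≤ d := by positivity
  have hl : -d ≤ lam (Fin.last _) := by
    have : 0 ≤ ((k:ℝ)+2) * (lam (Fin.last _) + d) := by linarith
    have := nonneg_of_mul_nonneg_right this (by positivity)
    linarith
  rw [hcd] at hc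
  have hnn : ∀ i : Fin (k+1), 0 ≤ c - lam i.succ := by
    intro i
    have h1 : lam i.succ ≤ lam 1 := hlam (by simp [Fin.le_def])
    have := le_max_right (k*d) (lam 1)
    linarith
  have hc0 : c ≤ lam 0 := by
    rw [hc]; apply max_le
    · rw [hd0]; nlinarith
    · exact hlam (by simp)
  rw [Fin.prod_univ_succ, derivative_mul]
  set q : ℝ[X] := ∏ i : Fin (k+1), (X - C (lam i.succ)) with hq
  have hq' : (derivative q).eval c = ∑ i : Fin (k+1), ∏ j ∈ Finset.univ.erase i, (c - lam j.succ) := by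
    rw [hq, derivative_prod_finset]
    simp [eval_finsetSum, eval_prod]
  have hq'0 : 0 ≤ (derivative q).eval c := by
    rw [hq']
    exact Finset.sum_nonneg fun i _ => Finset.prod_nonneg fun j _ => hnn _
  have hqe : q.eval c = ∏ i : Fin (k+1), (c - lam i.succ) := by simp [hq, eval_prod]
  simp only [derivative_sub, derivative_X, derivative_C, sub_zero, one_mul, eval_add, eval_mul, eval_sub, eval_X, eval_C]
  rcases le_total (lam 1) (k * d) with h1 | h1
  · rw [max_eq_left h1] at hc
    have key : (k+1) * eval c q ≤ (k+1) * (d * (derivative q).eval c) := by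
      have : (k+1) * eval c q = ∑ i : Fin (k+1), (c - lam i.succ) * ∏ j ∈ Finset.univ.erase i, (c - lam j.succ) := by
        simp only [Finset.mul_prod_erase _ (fun j : Fin (k+1) => c - lam j.succ) (Finset.mem_univ _)]
        simp [hqe]
      rw [this, hq', ← mul_assoc, Finset.mul_sum]
      refine Finset.sum_le_sum fun i _ => mul_le_mul_of_nonneg_right ?_ (Finset.prod_nonneg fun j _ => hnn _)
      have : lam (Fin.last _) ≤ lam i.succ := hlam (Fin.le_last _)
      rw [hc]; linarith
    have := le_of_mul_le_mul_left key (by positivity)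
    rw [hd0, hc] at *
    nlinarith
  · rw [max_eq_right h1] at hc
    have : eval c q = 0 := by
      rw [hqe]; apply Finset.prod_eq_zero (Finset.mem_univ 0); simp [hc]
    rw [this]
    nlinarith

/-- the critical points of a Ciarlet spectrum (a real list
λ₁ ≥ … ≥ λₙ with nλₙ + λ₁ ≥ 0) are realizable. -/
theorem critical_points_of_ciarlet_realizable (n : ℕ) (hn : 2 ≤ n)
    (lam : Fin n → ℝ) (hlam : Antitone lam)
    (hciarlet : 0 ≤ (n : ℝ) * lam ⟨n - 1, by omega⟩ + lam ⟨0, by omega⟩)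
    (p : Polynomial ℂ) (hp : p = ∏ i, (X - C ((lam i : ℂ)))) :
    Realizable p.derivative.roots := by
  obtain ⟨k, rfl⟩ : ∃ k, n = k + 2 := ⟨n - 2, by omega⟩
  have hci : 0 ≤ ((k:ℝ)+2) * lam (Fin.last _) + lam 0 := by
    have := hciarlet
    push_cast at this
    exact this
  have h0 : 0 ≤ lam 0 := by
    have : lam (Fin.last _) ≤ lam 0 := hlam (Fin.zero_le _)
    by_contra hneg
    push Not at hneg
    have : (k:ℝ) * lam (Fin.last _) ≤ 0 := mul_nonpos_of_nonneg_of_nonpos (by positivity) (by linarith)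
    linarith
  have hdp := deriv_nonpos k lam hlam hci h0
  set c := max (k / (k+2) * lam 0) (lam 1) with hc
  set P : ℝ[X] := ∏ i, (X - C (lam i)) with hP
  have hpP : p = P.map (algebraMap ℝ ℂ) := by
    rw [hp, hP]; simp [Polynomial.map_prod]
  have hPm : P.Monic := monic_prod_of_monic _ _ fun i _ => monic_X_sub_C _
  have hPd : P.natDegree = k + 2 := by
    rw [hP, natDegree_prod_of_monic _ _ fun i _ => monic_X_sub_C _]; simp
  have hpm : p.Monic := by rw [hpP]; exact hPm.map _
  have hpd : p.natDegree = k + 2 := by rw [hpP, hPm.natDegree_map, hPd]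
  have hp'd : p.derivative.natDegree = k + 1 := by
    rw [natDegree_derivative, hpd]; rfl
  have hp'l : p.derivative.leadingCoeff = (k:ℂ) + 2 := by
    have h1 := hpm.coeff_natDegree
    rw [hpd] at h1
    rw [leadingCoeff, hp'd, coeff_derivative, h1]
    push_cast
    ring
  have hp'0 : p.derivative ≠ 0 := by
    intro h; rw [h] at hp'd; simp at hp'd
  set R := p.derivative.roots with hR
  have hcard : R.card = k + 1 := by
    rw [← hp'd]; exact (IsAlgClosed.splits _).natDegree_eq_card_roots.symm
  have hroot : ∀ z ∈ R, z.im = 0 ∧ lam (Fin.last _) ≤ z.re := by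
    intro z hz
    have hdeg : 0 < p.degree := by
      rw [← natDegree_pos_iff_degree_pos, hpd]; omega
    have hz1 : z ∈ p.derivative.rootSet ℂ := by
      rw [mem_rootSet]
      exact ⟨hp'0, by simpa using (mem_roots'.1 hz).2⟩
    have hz2 := rootSet_derivative_subset_convexHull_rootSet hdeg hz1
    have hconv : Convex ℝ ({z : ℂ | z.im = 0} ∩ {z : ℂ | lam (Fin.last _) ≤ z.re}) :=
      (convex_hyperplane Complex.imLm.isLinear 0).inter (convex_halfSpace_re_ge _)
    refine convexHull_min ?_ hconv hz2
    intro w hw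
    have hw1 := (mem_rootSet.1 hw).2
    rw [hp] at hw1
    simp only [map_prod, Finset.prod_eq_zero_iff] at hw1
    obtain ⟨i, _, hi⟩ := hw1
    have hw2 : w = (lam i : ℂ) := by
      simpa [sub_eq_zero] using hi
    rw [hw2]
    exact ⟨by simp, by simpa using hlam (Fin.le_last i)⟩
  have hRs : R = (R.map Complex.re).map (fun x : ℝ => (x : ℂ)) := by
    rw [Multiset.map_map]
    conv_lhs => rw [← Multiset.map_id R]
    refine Multiset.map_congr rfl fun z hz => ?_
    apply Complex.ext <;> simp [(hroot z hz).1]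
  obtain ⟨s, hs⟩ : ∃ s, s = R.map Complex.re := ⟨_, rfl⟩
  rw [← hs] at hRs
  have hsl : ∀ x ∈ s, lam (Fin.last _) ≤ x := by
    intro x hx
    rw [hs] at hx
    obtain ⟨z, hz, rfl⟩ := Multiset.mem_map.1 hx
    exact (hroot z hz).2
  have hev : P.derivative.eval c = ((k:ℝ)+2) * (s.map (fun x => c - x)).prod := by
    have h1 := (IsAlgClosed.splits p.derivative).eval_eq_prod_roots (c : ℂ)
    rw [hp'l, ← hR, hRs, hpP, derivative_map, Multiset.map_map] at h1
    have h2 : (s.map ((fun x : ℂ => (c:ℂ) - x) ∘ fun x : ℝ => (x:ℂ))).prod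
        = (((s.map (fun x => c - x)).prod : ℝ) : ℂ) := by
      have := map_multiset_prod Complex.ofRealHom (s.map (fun x => c - x))
      rw [Multiset.map_map] at this
      refine Eq.trans ?_ this.symm
      congr 1
      refine Multiset.map_congr rfl fun x _ => ?_
      simp
    rw [h2] at h1
    have h3 : eval (c:ℂ) (P.derivative.map (algebraMap ℝ ℂ)) = ((P.derivative.eval c : ℝ) : ℂ) :=
      eval_map_apply (f := algebraMap ℝ ℂ) c
    rw [h3] at h1
    exact_mod_cast h1
  have hex : ∃ a ∈ s, c ≤ a := by
    by_contra hcon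
    push Not at hcon
    have : 0 < (s.map (fun x => c - x)).prod := by
      apply Multiset.prod_pos
      intro y hy
      obtain ⟨x, hx, rfl⟩ := Multiset.mem_map.1 hy
      linarith [hcon x hx]
    rw [hev] at hdp
    have : 0 < ((k:ℝ)+2) * (s.map (fun x => c - x)).prod := by positivity
    linarith
  obtain ⟨a, has, hca⟩ := hex
  obtain ⟨t, ht⟩ := Multiset.exists_cons_of_mem has
  rw [hRs, ht]
  apply real_ms
  have hct : t.card = k := by
    have : s.card = k + 1 := by rw [hs, Multiset.card_map, hcard]
    rw [ht] at this; simpa using this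
  have hb : (t.map (fun x => max (-x) 0)).sum ≤ (t.map (fun x => max (-x) 0)).card • (lam 0 / (k+2)) := by
    apply Multiset.sum_le_card_nsmul
    intro x hx
    obtain ⟨y, hy, rfl⟩ := Multiset.mem_map.1 hx
    have : lam (Fin.last _) ≤ y := hsl y (by rw [ht]; exact Multiset.mem_cons_of_mem hy)
    apply max_le _ (by positivity)
    rw [le_div_iff₀ (by positivity)]
    have : 0 ≤ ((k:ℝ)+2) * (y - lam (Fin.last _)) := mul_nonneg (by positivity) (by linarith)
    linarith
  rw [Multiset.card_map, hct, nsmul_eq_mul] at hb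
  have : k / (k+2) * lam 0 ≤ c := le_max_left _ _
  have h3 : (k:ℝ) * (lam 0 / (k+2)) = k / (k+2) * lam 0 := by ring
  linarith
end

section
/- Let Λ = {λ_1,…,λ_n} (n ≥ 2) be a finite multiset of complex numbers and let H ∈ M_n(ℂ) be a complex Hadamard matrix. If A = U D U* is entrywise nonnegative (in particular real), where U = (1/√n)H and D = diag(λ_1,…,λ_n), then for every i ∈ {1,…,n} the principal submatrix A_{(i)} is an entrywise nonnegative matrix whose multiset of eigenvalues (with multiplicity) is the multiset Λ' of critical points of Λ; hence Λ' is realizable. -/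
open Polynomial Matrix

/-- The embedding Fin (n-1) → Fin n skipping index i. -/
def delIdx {n : ℕ} (i : Fin n) (j : Fin (n - 1)) : Fin n :=
  if h : (j : ℕ) < (i : ℕ) then ⟨j, by have := i.isLt; omega⟩
  else ⟨(j : ℕ) + 1, by have := j.isLt; have := i.isLt; omega⟩

/-- The principal submatrix of A obtained by deleting the i-th row and column. -/
def delSub {n : ℕ} {R : Type*} (A : Matrix (Fin n) (Fin n) R) (i : Fin n) :
    Matrix (Fin (n - 1)) (Fin (n - 1)) R :=
  A.submatrix (delIdx i) (delIdx i)

/-- Diagonal entries of the adjugate of a matrix diagonalised by mutually inverse matrices. -/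
lemma adjugate_conj_diag {ι R : Type*} [Fintype ι] [DecidableEq ι] [CommRing R]
    (P Q : Matrix ι ι R) (hPQ : P * Q = 1) (d : ι → R) :
    (P * Matrix.diagonal d * Q).adjugate
      = P * Matrix.diagonal (fun j => ∏ k ∈ Finset.univ.erase j, d k) * Q := by
  have hQP : Q * P = 1 := mul_eq_one_comm.mp hPQ
  have hdet : Q.det * P.det = 1 := by rw [← Matrix.det_mul, hQP, Matrix.det_one]
  have h1 : Q.adjugate = Q.det • P := by
    calc Q.adjugate = Q.adjugate * (Q * P) := by rw [hQP, mul_one]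
      _ = Q.det • P := by rw [← mul_assoc, Matrix.adjugate_mul]; simp
  have h2 : P.adjugate = P.det • Q := by
    calc P.adjugate = (Q * P) * P.adjugate := by rw [hQP, one_mul]
      _ = P.det • Q := by rw [mul_assoc, Matrix.mul_adjugate]; simp
  rw [Matrix.adjugate_mul_distrib, Matrix.adjugate_mul_distrib, h1, h2, Matrix.adjugate_diagonal]
  simp only [Matrix.smul_mul, Matrix.mul_smul, smul_smul]
  rw [mul_comm P.det, hdet, one_smul, mul_assoc]

lemma delIdx_eq {m : ℕ} (i : Fin (m + 1)) : delIdx i = (i.succAbove : Fin m → Fin (m + 1)) := by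
  funext j
  apply Fin.ext
  unfold delIdx Fin.succAbove
  simp only [Fin.lt_def, Fin.val_castSucc]
  split_ifs <;> simp

lemma charpoly_delSub {m : ℕ} {R : Type*} [CommRing R]
    (A : Matrix (Fin (m + 1)) (Fin (m + 1)) R) (i : Fin (m + 1)) :
    (delSub A i).charpoly = A.charmatrix.adjugate i i := by
  rw [Matrix.adjugate_fin_succ_eq_det_submatrix]
  have h : (-1 : R[X]) ^ ((i : ℕ) + (i : ℕ)) = 1 := Even.neg_one_pow ⟨_, rfl⟩
  rw [h, one_mul, Matrix.charpoly]
  congr 1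
  unfold delSub
  rw [delIdx_eq]
  ext1 j k
  by_cases hjk : j = k
  · subst hjk; simp [Matrix.charmatrix_apply]
  · simp [Matrix.charmatrix_apply, Matrix.diagonal_apply, hjk]

lemma charpoly_delSub_eq {m : ℕ} (lam : Fin (m + 1) → ℂ)
    (U A : Matrix (Fin (m + 1)) (Fin (m + 1)) ℂ) (hUU : U * Uᴴ = 1)
    (hent : ∀ i j, U i j * star (U i j) = ((m + 1 : ℕ) : ℂ)⁻¹)
    (hA : A = U * Matrix.diagonal lam * Uᴴ) (i : Fin (m + 1)) :
    (delSub A i).charpoly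
      = C (((m + 1 : ℕ) : ℂ)⁻¹) * (∏ j, (X - C (lam j))).derivative := by
  have hPQ : U.map (C : ℂ →+* ℂ[X]) * Uᴴ.map (C : ℂ →+* ℂ[X]) = 1 := by
    rw [← Matrix.map_mul, hUU]; simp
  have hcm : A.charmatrix = U.map (C : ℂ →+* ℂ[X])
      * Matrix.diagonal (fun j => (X - C (lam j) : ℂ[X])) * Uᴴ.map (C : ℂ →+* ℂ[X]) := by
    have hd : Matrix.diagonal (fun j => (X - C (lam j) : ℂ[X]))
        = (X : ℂ[X]) • (1 : Matrix (Fin (m + 1)) (Fin (m + 1)) ℂ[X])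
          - (Matrix.diagonal lam).map (C : ℂ →+* ℂ[X]) := by
      ext1 j k
      by_cases hjk : j = k
      · subst hjk; simp
      · simp [hjk]
    rw [hd, mul_sub, sub_mul, ← Matrix.map_mul, ← Matrix.map_mul, ← hA]
    rw [Matrix.mul_smul, Matrix.smul_mul, mul_one, hPQ]
    ext1 j k
    simp [Matrix.charmatrix_apply, Matrix.diagonal_apply, Matrix.one_apply]
  rw [charpoly_delSub, hcm, adjugate_conj_diag _ _ hPQ, derivative_prod_finset, Finset.mul_sum,
    Matrix.mul_apply]
  refine Finset.sum_congr rfl fun j _ => ?_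
  rw [Matrix.mul_diagonal, ← hent i j]
  simp only [Matrix.map_apply, Matrix.conjTranspose_apply, map_mul, derivative_sub, derivative_X,
    derivative_C]
  ring

/-- if H is a complex Hadamard matrix, U = (1/√n)H, and
A = U D U* is entrywise nonnegative (in particular real) with
D = diag(λ₁,…,λₙ), then for every i the principal submatrix A_{(i)} is
entrywise nonnegative and its spectrum (with multiplicity) is the multiset of
critical points of Λ = {λ₁,…,λₙ}; hence the critical points are realizable. -/
theorem hadamard_similarity_critical_points (n : ℕ) (hn : 2 ≤ n)
    (lam : Fin n → ℂ)
    (H : Matrix (Fin n) (Fin n) ℂ)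
    (hH1 : ∀ i j, ‖H i j‖ = 1)
    (hH2 : H * Hᴴ = (n : ℂ) • 1)
    (U : Matrix (Fin n) (Fin n) ℂ) (hU : U = ((Real.sqrt n : ℂ))⁻¹ • H)
    (A : Matrix (Fin n) (Fin n) ℂ)
    (hA : A = U * Matrix.diagonal lam * Uᴴ)
    (hpos : ∀ i j, (A i j).im = 0 ∧ 0 ≤ (A i j).re)
    (p : Polynomial ℂ) (hp : p = ∏ j, (X - C (lam j))) :
    (∀ i : Fin n,
      (∀ j k, ((delSub A i) j k).im = 0 ∧ 0 ≤ ((delSub A i) j k).re) ∧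
      (delSub A i).charpoly.roots = p.derivative.roots) ∧
    Realizable p.derivative.roots := by
  have hn0 : (n : ℂ) ≠ 0 := by exact_mod_cast (by omega : n ≠ 0)
  have hs : ((Real.sqrt n : ℂ))⁻¹ * star ((Real.sqrt n : ℂ))⁻¹ = (n : ℂ)⁻¹ := by
    have h : ((Real.sqrt n : ℂ)) * (Real.sqrt n : ℂ) = n := by
      rw [← Complex.ofReal_mul, Real.mul_self_sqrt (Nat.cast_nonneg n)]; simp
    rw [star_inv₀]
    have : star (Real.sqrt n : ℂ) = (Real.sqrt n : ℂ) := Complex.conj_ofReal _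
    rw [this, ← mul_inv, h]
  have hUU : U * Uᴴ = 1 := by
    rw [hU, Matrix.conjTranspose_smul, Matrix.smul_mul, Matrix.mul_smul, hH2, smul_smul, smul_smul,
      hs, inv_mul_cancel₀ hn0, one_smul]
  have hent : ∀ i j, U i j * star (U i j) = (n : ℂ)⁻¹ := by
    intro i j
    have h1 : H i j * star (H i j) = 1 := by
      have := Complex.mul_conj' (H i j)
      rw [hH1] at this
      simpa using this
    rw [hU, Matrix.smul_apply, smul_eq_mul, star_mul', mul_mul_mul_comm, hs, h1, mul_one]
  have key : ∀ i : Fin n, (delSub A i).charpoly.roots = p.derivative.roots := by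
    obtain ⟨m, rfl⟩ : ∃ m, n = m + 1 := ⟨n - 1, by omega⟩
    intro i
    rw [charpoly_delSub_eq lam U A hUU hent hA i, ← hp, roots_C_mul _ (inv_ne_zero hn0)]
  refine ⟨fun i => ⟨fun j k => hpos _ _, key i⟩, ?_⟩
  let i : Fin n := ⟨0, by omega⟩
  refine ⟨n - 1, (delSub A i).map Complex.re, fun j k => (hpos _ _).2, ?_⟩
  rw [← key i, ← Matrix.charpoly_map]
  congr 2
  ext1 j k
  apply Complex.ext
  · simp
  · simpa [delSub] using ((hpos (delIdx i j) (delIdx i k)).1).symm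
end
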